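/- Let X be a locally compact Hausdorff space and let ζ be a quasi-integral on X. Then for every open O ⊆ X with compact closure, τ_ζ(O) = sup{τ_ζ(K) : K ⊆ O compact} (inner regularity of τ_ζ on open sets with compact closure). -/

import Mathlib

/-!
Both inequalities compare the two families of test functions.

If `K ⊆ O` is compact, Urysohn's lemma gives `h ∈ C_c(X)` with `1_K ≤ h ≤ 1_O`, so
`τ_ζ(K) ≤ ζ(h) ≤ τ_ζ(O)`.

Conversely, let `f ≤ 1_O` and `δ > 0`. The set `K = {x ∈ closure O | δ ≤ f x}` is compact and
contained in `O`, and `(f - δ)⁺ ≤ 1_K`, so monotonicity gives `ζ((f - δ)⁺) ≤ τ_ζ(K)`. Since `f⁺`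
and `(f - δ)⁺` have supports in the fixed compact set `tsupport f` and are within `δ` of each other,
Lipschitz continuity gives `ζ(f) ≤ ζ(f⁺) ≤ ζ((f - δ)⁺) + N δ`; finally let `δ → 0`.

Suprema and infima of reals are only meaningful for nonempty bounded sets. The required bounds
come from `0 ≤ g` whenever `1_K ≤ g`, and from `f ≤ h` whenever `f ≤ 1_O`, where `h ∈ C_c(X)` is
`1` on `closure O`.
-/

open Set Topology
open scoped CompactlySupported

noncomputable section

/-- The family `𝒜(X)` of admissible sets: compact sets together with
open sets with compact closure. -/
def Admissible (X : Type*) [TopologicalSpace X] : Set (Set X) :=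
  {A | IsCompact A ∨ (IsOpen A ∧ IsCompact (closure A))}

/-- A quasi-integral on `X`: a monotone, locally Lipschitz (w.r.t. the uniform norm,
on functions with support in a fixed compact set) functional on `C_c(X, ℝ)` which is
linear on every subspace of the form `{φ ∘ f | φ ∈ C(ℝ), φ 0 = 0}`. -/
structure QuasiIntegral (X : Type*) [TopologicalSpace X] where
  toFun : C_c(X, ℝ) → ℝ
  mono' : ∀ f g : C_c(X, ℝ), (∀ x, f x ≤ g x) → toFun f ≤ toFun g
  lipschitz' : ∀ K : Set X, IsCompact K → ∃ N : ℝ, 0 ≤ N ∧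
    ∀ f g : C_c(X, ℝ), tsupport ⇑f ⊆ K → tsupport ⇑g ⊆ K →
      |toFun f - toFun g| ≤ N * ⨆ x, |f x - g x|
  quasilin_add' : ∀ (f : C_c(X, ℝ)) (φ ψ : ℝ → ℝ), Continuous φ → Continuous ψ →
    φ 0 = 0 → ψ 0 = 0 → ∀ gφ gψ gs : C_c(X, ℝ),
    (∀ x, gφ x = φ (f x)) → (∀ x, gψ x = ψ (f x)) →
    (∀ x, gs x = φ (f x) + ψ (f x)) → toFun gs = toFun gφ + toFun gψ
  quasilin_smul' : ∀ (f : C_c(X, ℝ)) (φ : ℝ → ℝ), Continuous φ → φ 0 = 0 →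
    ∀ (c : ℝ) (gφ gc : C_c(X, ℝ)),
    (∀ x, gφ x = φ (f x)) → (∀ x, gc x = c * φ (f x)) → toFun gc = c * toFun gφ

/-- A topological measure on `X` (normalized to vanish on non-admissible sets):
a nonnegative, additive, monotone, regular set function on `𝒜(X)`. -/
structure TopMeasure (X : Type*) [TopologicalSpace X] where
  toFun : Set X → ℝ
  zero_of_not_mem' : ∀ A : Set X, A ∉ Admissible X → toFun A = 0
  nonneg' : ∀ A : Set X, 0 ≤ toFun A
  additive' : ∀ A A' : Set X, A ∈ Admissible X → A' ∈ Admissible X →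
    A ∪ A' ∈ Admissible X → Disjoint A A' → toFun (A ∪ A') = toFun A + toFun A'
  mono' : ∀ A A' : Set X, A ∈ Admissible X → A' ∈ Admissible X → A ⊆ A' →
    toFun A ≤ toFun A'
  outer_reg' : ∀ K : Set X, IsCompact K →
    toFun K = sInf (toFun '' {O : Set X | IsOpen O ∧ IsCompact (closure O) ∧ K ⊆ O})
  inner_reg' : ∀ O : Set X, IsOpen O → IsCompact (closure O) →
    toFun O = sSup (toFun '' {K : Set X | IsCompact K ∧ K ⊆ O})

variable {X : Type*} [TopologicalSpace X]

/-- `τ_ζ(K) = inf {ζ(f) | f ∈ C_c(X), f ≥ 1_K}`, for `K` compact. -/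
def tauCompact (ζ : QuasiIntegral X) (K : Set X) : ℝ :=
  sInf (ζ.toFun '' {f : C_c(X, ℝ) | ∀ x, K.indicator (fun _ => (1 : ℝ)) x ≤ f x})

/-- `τ_ζ(O) = sup {ζ(f) | f ∈ C_c(X), f ≤ 1_O}`, for `O` open with compact closure. -/
def tauOpen (ζ : QuasiIntegral X) (O : Set X) : ℝ :=
  sSup (ζ.toFun '' {f : C_c(X, ℝ) | ∀ x, f x ≤ O.indicator (fun _ => (1 : ℝ)) x})

open scoped Classical in
/-- The induced set function `τ_ζ` of a quasi-integral `ζ`. -/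
def inducedSetFun (ζ : QuasiIntegral X) (A : Set X) : ℝ :=
  if IsCompact A then tauCompact ζ A
  else if IsOpen A ∧ IsCompact (closure A) then tauOpen ζ A
  else 0

namespace QuasiIntegral

theorem exists_indicator_le_le_indicator {X : Type*} [TopologicalSpace X] [T2Space X]
    [LocallyCompactSpace X] {K O : Set X} (hK : IsCompact K) (hO : IsOpen O) (hKO : K ⊆ O) :
    ∃ h : C_c(X, ℝ), (∀ x, K.indicator (fun _ => (1 : ℝ)) x ≤ h x) ∧
      ∀ x, h x ≤ O.indicator (fun _ => (1 : ℝ)) x := by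
  obtain ⟨f, hfK, hfO, hfc, hf⟩ := exists_continuous_one_zero_of_isCompact hK
    hO.isClosed_compl (disjoint_compl_right_iff_subset.mpr hKO)
  refine ⟨⟨f, hfc⟩, fun x => ?_, fun x => ?_⟩
  · change _ ≤ f x
    by_cases hx : x ∈ K
    · simp [hx, hfK hx]
    · simpa [hx] using (hf x).1
  · change f x ≤ _
    by_cases hx : x ∈ O
    · simpa [hx] using (hf x).2
    · simp [hx, hfO hx]

/-- The truncation `(f - δ)⁺`, which for `δ ≥ 0` again has compact support. -/
def truncate {X : Type*} [TopologicalSpace X] (f : C_c(X, ℝ)) (δ : ℝ) (hδ : 0 ≤ δ) :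
    C_c(X, ℝ) where
  toFun x := max (f x - δ) 0
  continuous_toFun := by fun_prop
  hasCompactSupport' := f.hasCompactSupport.comp_left (g := fun t => max (t - δ) 0) (by simpa)

theorem truncate_apply {X : Type*} [TopologicalSpace X] (f : C_c(X, ℝ)) (δ : ℝ) (hδ : 0 ≤ δ)
    (x : X) : truncate f δ hδ x = max (f x - δ) 0 := rfl

theorem tsupport_truncate_subset {X : Type*} [TopologicalSpace X] (f : C_c(X, ℝ)) (δ : ℝ)
    (hδ : 0 ≤ δ) : tsupport ⇑(truncate f δ hδ) ⊆ tsupport ⇑f := by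
  refine closure_mono fun x hx hfx => hx ?_
  simp [truncate_apply, hfx, hδ]

/-- Raising the truncation level from `0` to `δ` changes `ζ` by `O(δ)`, with a constant that
depends only on the support of `f`. -/
theorem exists_le_truncate_add {X : Type*} [TopologicalSpace X] (ζ : QuasiIntegral X)
    (f : C_c(X, ℝ)) : ∃ N : ℝ, 0 ≤ N ∧ ∀ (δ : ℝ) (hδ : 0 ≤ δ),
      ζ.toFun f ≤ ζ.toFun (truncate f δ hδ) + N * δ := by
  obtain ⟨N, hN, hL⟩ := ζ.lipschitz' (tsupport ⇑f) f.hasCompactSupport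
  refine ⟨N, hN, fun δ hδ => ?_⟩
  have h1 : ζ.toFun f ≤ ζ.toFun (truncate f 0 le_rfl) :=
    ζ.mono' _ _ fun x => by simp [truncate_apply]
  have h2 := hL _ _ (tsupport_truncate_subset f 0 le_rfl) (tsupport_truncate_subset f δ hδ)
  have h3 : ⨆ x, |truncate f 0 le_rfl x - truncate f δ hδ x| ≤ δ := by
    refine Real.iSup_le (fun x => ?_) hδ
    simp only [truncate_apply, sub_zero]
    rw [abs_le]
    constructor <;> rcases max_cases (f x) 0 with h | h <;>
      rcases max_cases (f x - δ) 0 with h' | h' <;> linarith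
  have h4 := mul_le_mul_of_nonneg_left h3 hN
  linarith [le_abs_self (ζ.toFun (truncate f 0 le_rfl) - ζ.toFun (truncate f δ hδ))]

theorem bddBelow_tauCompact {X : Type*} [TopologicalSpace X] (ζ : QuasiIntegral X) (K : Set X) :
    BddBelow (ζ.toFun '' {f : C_c(X, ℝ) | ∀ x, K.indicator (fun _ => (1 : ℝ)) x ≤ f x}) := by
  refine ⟨ζ.toFun 0, ?_⟩
  rintro _ ⟨g, hg, rfl⟩
  exact ζ.mono' _ _ fun x => (indicator_nonneg (fun _ _ => zero_le_one) x).trans (hg x)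

theorem bddAbove_tauOpen {X : Type*} [TopologicalSpace X] [T2Space X] [LocallyCompactSpace X]
    (ζ : QuasiIntegral X) {O : Set X} (hOc : IsCompact (closure O)) :
    BddAbove (ζ.toFun '' {f : C_c(X, ℝ) | ∀ x, f x ≤ O.indicator (fun _ => (1 : ℝ)) x}) := by
  obtain ⟨h, hh, -⟩ := exists_indicator_le_le_indicator hOc isOpen_univ (subset_univ _)
  refine ⟨ζ.toFun h, ?_⟩
  rintro _ ⟨f, hf, rfl⟩
  refine ζ.mono' _ _ fun x => (hf x).trans ((?_ : _ ≤ _).trans (hh x))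
  exact indicator_le_indicator_of_subset subset_closure (fun _ => zero_le_one) x

theorem tauCompact_le_tauOpen {X : Type*} [TopologicalSpace X] [T2Space X]
    [LocallyCompactSpace X] (ζ : QuasiIntegral X) {K O : Set X} (hK : IsCompact K)
    (hO : IsOpen O) (hOc : IsCompact (closure O)) (hKO : K ⊆ O) :
    tauCompact ζ K ≤ tauOpen ζ O := by
  obtain ⟨h, hKh, hhO⟩ := exists_indicator_le_le_indicator hK hO hKO
  exact (csInf_le (bddBelow_tauCompact ζ K) ⟨h, hKh, rfl⟩).trans
    (le_csSup (bddAbove_tauOpen ζ hOc) ⟨h, hhO, rfl⟩)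

theorem exists_compact_truncate_le_tauCompact {X : Type*} [TopologicalSpace X] [T2Space X]
    [LocallyCompactSpace X] (ζ : QuasiIntegral X) {O : Set X} (hOc : IsCompact (closure O))
    (f : C_c(X, ℝ)) (hf : ∀ x, f x ≤ O.indicator (fun _ => (1 : ℝ)) x) (δ : ℝ) (hδ : 0 < δ) :
    ∃ K : Set X, IsCompact K ∧ K ⊆ O ∧ ζ.toFun (truncate f δ hδ.le) ≤ tauCompact ζ K := by
  have hmem : ∀ x, 0 < f x → x ∈ O := fun x hx => by
    by_contra hxO
    have := hf x
    rw [indicator_of_notMem hxO] at this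
    linarith
  have hK : IsCompact (closure O ∩ {x | δ ≤ f x}) :=
    hOc.inter_right (isClosed_le continuous_const f.continuous)
  refine ⟨_, hK, fun x hx => hmem x (hδ.trans_le hx.2), ?_⟩
  obtain ⟨h, hh, -⟩ := exists_indicator_le_le_indicator hK isOpen_univ (subset_univ _)
  refine le_csInf ⟨_, h, hh, rfl⟩ ?_
  rintro _ ⟨g, hg, rfl⟩
  refine ζ.mono' _ _ fun x => le_trans ?_ (hg x)
  rw [truncate_apply]
  by_cases hx : δ ≤ f x
  · have hxO := hmem x (hδ.trans_le hx)
    have h1 := hf x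
    rw [indicator_of_mem hxO] at h1
    rw [indicator_of_mem (show x ∈ closure O ∩ {x | δ ≤ f x} from ⟨subset_closure hxO, hx⟩)]
    exact max_le (by linarith) zero_le_one
  · rw [max_eq_right (by linarith [not_le.mp hx])]
    exact indicator_nonneg (fun _ _ => zero_le_one) x

end QuasiIntegral

open QuasiIntegral in
/-- inner regularity of `τ_ζ` on open sets with compact closure:
`τ_ζ(O) = sup {τ_ζ(K) | K compact, K ⊆ O}`. -/
theorem inducedSetFun_innerReg {X : Type*} [TopologicalSpace X] [T2Space X]
    [LocallyCompactSpace X] (ζ : QuasiIntegral X) (O : Set X) (hO : IsOpen O)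
    (hOc : IsCompact (closure O)) :
    tauOpen ζ O = sSup (tauCompact ζ '' {K : Set X | IsCompact K ∧ K ⊆ O}) := by
  have hle : ∀ t ∈ tauCompact ζ '' {K : Set X | IsCompact K ∧ K ⊆ O}, t ≤ tauOpen ζ O := by
    rintro _ ⟨K, ⟨hK, hKO⟩, rfl⟩
    exact tauCompact_le_tauOpen ζ hK hO hOc hKO
  apply le_antisymm
  · refine csSup_le ⟨_, 0, fun x => indicator_nonneg (fun _ _ => zero_le_one) x, rfl⟩ ?_
    rintro _ ⟨f, hf, rfl⟩
    obtain ⟨N, hN, hL⟩ := exists_le_truncate_add ζ f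
    refine le_of_forall_pos_le_add fun ε hε => ?_
    -- The level `δ = ε / (N + 1)` makes the Lipschitz error `N * δ` at most `ε`, also when `N = 0`.
    have hδ : 0 < ε / (N + 1) := by positivity
    obtain ⟨K, hK, hKO, hle'⟩ := exists_compact_truncate_le_tauCompact ζ hOc f hf _ hδ
    have h1 := hL _ hδ.le
    have h2 : tauCompact ζ K ≤ sSup (tauCompact ζ '' {K : Set X | IsCompact K ∧ K ⊆ O}) :=
      le_csSup ⟨_, hle⟩ ⟨K, ⟨hK, hKO⟩, rfl⟩
    have h3 : N * (ε / (N + 1)) ≤ ε := by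
      have : (N + 1) * (ε / (N + 1)) = ε := by field_simp
      linarith
    linarith
  · exact csSup_le ⟨_, ∅, ⟨isCompact_empty, empty_subset O⟩, rfl⟩ hle

end
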